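/- Assume f satisfies (A1)–(A3) and fix χ > 0. There is ε₀ > 0 (depending only on χ, β, a, K) such that for all 0 < ε < ε₀ and all x̂ ∈ NUE_χ: the map G_{x̂} := Ψ_{f̂^{−1}(x̂)}^{−1} ∘ g_{x̂} ∘ Ψ_{x̂} is a diffeomorphism from [−10Q_ε(x̂), 10Q_ε(x̂)] onto its image, and it can be written as G_{x̂}(t) = A t + h(t) where: (1) |A| < e^{−χ}; (2) h(0) = 0, (dh)_0 = 0, and ‖h‖₀ + ‖dh‖₀ + Hol_{β/2}(dh) < ε, the suprema and Hölder constant being taken over [−10Q_ε(x̂), 10Q_ε(x̂)]. In particular, sup |dG_{x̂}| < e^{−χ/2} on [−10Q_ε(x̂), 10Q_ε(x̂)]. -/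

import Mathlib

open Real MeasureTheory Filter Topology Metric Set

noncomputable section

namespace OneDim

/-- The interval `M = [0, 1/2]`. -/
def Mset : Set ℝ := Set.Icc 0 (1/2)

/-- Data of a piecewise `C^{1+β}` interval map `f : M → M` with discontinuity set `D`,
constants `β ∈ (0,1)`, `a, K > 1`, radius function `r` and inverse branches `g`. -/
structure GoodMap where
  f : ℝ → ℝ
  D : Set ℝ
  β : ℝ
  a : ℝ
  K : ℝ
  r : ℝ → ℝ
  g : ℝ → ℝ → ℝ
  hβ0 : 0 < β
  hβ1 : β < 1
  ha : 1 < a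
  hK : 1 < K
  hmaps : ∀ x ∈ Mset, f x ∈ Mset
  hD : D ⊆ Mset
  hdiff : DifferentiableOn ℝ f (Mset \ D)

namespace GoodMap

/-- The critical set `C = {x ∈ M \ D : df_x = 0}`. -/
def crit (F : GoodMap) : Set ℝ := {x | x ∈ Mset \ F.D ∧ deriv F.f x = 0}

/-- The singular set `S = C ∪ D`. -/
def S (F : GoodMap) : Set ℝ := F.crit ∪ F.D

/-- Distance to the singular set. -/
def dS (F : GoodMap) (x : ℝ) : ℝ := Metric.infDist x F.S

/-- Conditions (A1)–(A3). -/
def SatA (F : GoodMap) : Prop :=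
  ∀ x ∈ Mset, x ∉ F.S → F.f x ∉ F.S →
    (min (F.dS x ^ F.a) (F.dS (F.f x) ^ F.a) < F.r x ∧ F.r x < 1) ∧
    -- (A1)
    (Set.InjOn F.f (Metric.ball x (2 * F.r x)) ∧
      (∀ y ∈ Metric.ball x (2 * F.r x), DifferentiableAt ℝ F.f y) ∧
      F.g x (F.f x) = x ∧
      (∀ z ∈ Metric.ball (F.f x) (2 * F.r x), F.f (F.g x z) = z) ∧
      Set.InjOn (F.g x) (Metric.ball (F.f x) (2 * F.r x)) ∧
      (∀ z ∈ Metric.ball (F.f x) (2 * F.r x), DifferentiableAt ℝ (F.g x) z)) ∧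
    -- (A2)
    ((∀ y ∈ Metric.ball x (2 * F.r x),
        F.dS x ^ F.a ≤ |deriv F.f y| ∧ |deriv F.f y| ≤ F.dS x ^ (-F.a)) ∧
      (∀ z ∈ Metric.ball (F.f x) (2 * F.r x),
        F.dS x ^ F.a ≤ |deriv (F.g x) z| ∧ |deriv (F.g x) z| ≤ F.dS x ^ (-F.a))) ∧
    -- (A3)
    ((∀ y ∈ Metric.ball x (2 * F.r x), ∀ z ∈ Metric.ball x (2 * F.r x),
        |deriv F.f y - deriv F.f z| ≤ F.K * |y - z| ^ F.β) ∧
      (∀ y ∈ Metric.ball (F.f x) (2 * F.r x), ∀ z ∈ Metric.ball (F.f x) (2 * F.r x),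
        |deriv (F.g x) y - deriv (F.g x) z| ≤ F.K * |y - z| ^ F.β))

end GoodMap

/-- Membership in the natural extension space `M̂`. -/
def inMhat (f : ℝ → ℝ) (x : ℤ → ℝ) : Prop :=
  (∀ n, x n ∈ Mset) ∧ ∀ n : ℤ, f (x (n - 1)) = x n

/-- The natural extension map `f̂` (left shift). -/
def fhat (x : ℤ → ℝ) : ℤ → ℝ := fun n => x (n + 1)

/-- Iterate `f̂^k` of the natural extension map, `k ∈ ℤ`. -/
def fhatI (k : ℤ) (x : ℤ → ℝ) : ℤ → ℝ := fun n => x (n + k)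

/-- The metric `d̂(x̂,ŷ) = sup{2^n d(x_n,y_n) : n ≤ 0}` on `M̂`. -/
def dhat (x y : ℤ → ℝ) : ℝ :=
  sSup {t : ℝ | ∃ n : ℤ, n ≤ 0 ∧ t = (2:ℝ) ^ n * |x n - y n|}

/-- The invertible derivative cocycle `d̂f^{(n)}` over `f̂`. -/
def dfhat (f : ℝ → ℝ) (x : ℤ → ℝ) (n : ℤ) : ℝ :=
  if 0 ≤ n then ∏ j ∈ Finset.range n.toNat, deriv f (x (j : ℤ))
  else (∏ j ∈ Finset.range (-n).toNat, deriv f (x (-(j : ℤ) - 1)))⁻¹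

/-- The Pesin parameter `u(x̂)`. -/
def uPes (f : ℝ → ℝ) (χ : ℝ) (x : ℤ → ℝ) : ℝ :=
  Real.sqrt (∑' n : ℕ, Real.exp (2 * (n:ℝ) * χ) * (dfhat f x (-(n:ℤ))) ^ 2)

/-- The Pesin chart `Ψ_{x̂}(t) = t/u(x̂) + x₀`. -/
def Psi (f : ℝ → ℝ) (χ : ℝ) (x : ℤ → ℝ) (t : ℝ) : ℝ := t / uPes f χ x + x 0

/-- The set `NUE_χ`. -/
def NUE (F : GoodMap) (χ : ℝ) : Set (ℤ → ℝ) :=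
  {x | inMhat F.f x ∧ (∀ n, x n ∉ F.S) ∧
    (∃ l > χ, Tendsto (fun n : ℕ => Real.log |dfhat F.f x (n:ℤ)| / (n:ℝ)) atTop (𝓝 l)) ∧
    (∃ l > χ, Tendsto (fun n : ℕ => Real.log |dfhat F.f x (-(n:ℤ))| / (-(n:ℝ))) atTop (𝓝 l))}

/-- `ρ(x̂) = d({x₋₁,x₀,x₁}, S)`. -/
def rho (F : GoodMap) (x : ℤ → ℝ) : ℝ :=
  min (F.dS (x (-1))) (min (F.dS (x 0)) (F.dS (x 1)))

/-- `I_ε = {e^{-εn/3} : n ≥ 0}`. -/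
def Ieps (ε : ℝ) : Set ℝ := {q | ∃ n : ℕ, q = Real.exp (-(ε * n) / 3)}

/-- `Q̃_ε(x̂)`. -/
def Qtilde (F : GoodMap) (χ ε : ℝ) (x : ℤ → ℝ) : ℝ :=
  ε ^ (3 / F.β) *
    min (uPes F.f χ x ^ (-(24 / F.β)))
      (uPes F.f χ (fhatI (-1) x) ^ (-(12 / F.β)) * rho F x ^ (72 * F.a / F.β))

/-- `Q_ε(x̂) = max{q ∈ I_ε : q ≤ Q̃_ε(x̂)}`. -/
def Qeps (F : GoodMap) (χ ε : ℝ) (x : ℤ → ℝ) : ℝ :=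
  sSup {q | q ∈ Ieps ε ∧ q ≤ Qtilde F χ ε x}

/-- The regular set. -/
def Reg (F : GoodMap) : Set (ℤ → ℝ) :=
  {x | inMhat F.f x ∧ (∀ n, x n ∉ F.S) ∧
    Tendsto (fun n : ℕ => Real.log (F.dS (x (n:ℤ))) / (n:ℝ)) atTop (𝓝 0) ∧
    Tendsto (fun n : ℕ => Real.log (F.dS (x (-(n:ℤ)))) / (n:ℝ)) atTop (𝓝 0)}

/-- The set `NUE*_χ`. -/
def NUEstar (F : GoodMap) (χ : ℝ) : Set (ℤ → ℝ) :=
  {x | x ∈ NUE F χ ∧ x ∈ Reg F ∧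
    (∃ nk : ℕ → ℤ, Tendsto nk atTop atBot ∧
      Tendsto (fun k => uPes F.f χ (fhatI (nk k) x)) atTop (𝓝 (uPes F.f χ x))) ∧
    Tendsto (fun n : ℕ => Real.log (uPes F.f χ (fhatI (-(n:ℤ)) x)) / (-(n:ℝ))) atTop (𝓝 0)}

/-- An ε-chart is a pair `(x̂, p)`, representing `Ψ_{x̂}` restricted to `[-p,p]`. -/
structure Chart where
  x : ℤ → ℝ
  p : ℝ

/-- `(x̂, p)` is a genuine ε-chart. -/
def IsChart (F : GoodMap) (χ ε : ℝ) (c : Chart) : Prop :=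
  c.x ∈ NUE F χ ∧ 0 < c.p ∧ c.p ≤ Qeps F χ ε c.x

/-- ε-overlap of two ε-charts. -/
def Overlap (F : GoodMap) (χ ε : ℝ) (c₁ c₂ : Chart) : Prop :=
  Real.exp (-ε) ≤ c₁.p / c₂.p ∧ c₁.p / c₂.p ≤ Real.exp ε ∧
  |c₁.x 0 - c₂.x 0| + |(uPes F.f χ c₁.x)⁻¹ - (uPes F.f χ c₂.x)⁻¹| < (c₁.p * c₂.p) ^ 4

/-- `g_{x̂} = g_{x₋₁}`, the inverse branch of `f` taking `x₀` to `x₋₁`. -/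
def ghat (F : GoodMap) (x : ℤ → ℝ) : ℝ → ℝ := F.g (x (-1))

/-- `G_{x̂} = Ψ_{f̂⁻¹x̂}⁻¹ ∘ g_{x̂} ∘ Ψ_{x̂}`. -/
def Gmap (F : GoodMap) (χ : ℝ) (x : ℤ → ℝ) (t : ℝ) : ℝ :=
  uPes F.f χ (fhatI (-1) x) * (ghat F x (Psi F.f χ x t) - x (-1))

/-- `G_{x̂,ŷ} = Ψ_{ŷ}⁻¹ ∘ g_{x̂} ∘ Ψ_{x̂}`. -/
def Gmap2 (F : GoodMap) (χ : ℝ) (x y : ℤ → ℝ) (t : ℝ) : ℝ :=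
  uPes F.f χ y * (ghat F x (Psi F.f χ x t) - y 0)

/-- `F_{x̂} = Ψ_{f̂x̂}⁻¹ ∘ f ∘ Ψ_{x̂}`. -/
def Fmap (F : GoodMap) (χ : ℝ) (x : ℤ → ℝ) (t : ℝ) : ℝ :=
  uPes F.f χ (fhat x) * (F.f (Psi F.f χ x t) - x 1)

/-- `δ_ε = e^{-εn}` where `n` is the unique positive integer with `e^{-εn} < ε ≤ e^{-ε(n-1)}`. -/
def deltaEps (ε : ℝ) : ℝ :=
  Real.exp (-(ε * ((⌊Real.log (1 / ε) / ε⌋ + 1 : ℤ) : ℝ)))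

/-- Weak edge `v ⤎ w` (from `w = Ψ_{x̂}^p` to `v = Ψ_{ŷ}^q`). -/
def WeakEdge (F : GoodMap) (χ ε : ℝ) (v w : Chart) : Prop :=
  IsChart F χ ε v ∧ IsChart F χ ε w ∧
  Overlap F χ ε ⟨fhatI (-1) w.x, v.p⟩ v ∧
  w.p ≤ Real.exp ε * v.p

/-- Edge `v ← w` (from `w = Ψ_{x̂}^p` to `v = Ψ_{ŷ}^q`). -/
def Edge (F : GoodMap) (χ ε : ℝ) (v w : Chart) : Prop :=
  IsChart F χ ε v ∧ IsChart F χ ε w ∧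
  Overlap F χ ε ⟨fhatI (-1) w.x, v.p⟩ v ∧
  |v.x 1 - w.x 0| < v.p ∧
  Real.exp (-v.p) ≤ uPes F.f χ (fhat v.x) / uPes F.f χ w.x ∧
  uPes F.f χ (fhat v.x) / uPes F.f χ w.x ≤ Real.exp v.p ∧
  w.p = min (Real.exp ε * v.p) (deltaEps ε * Qeps F χ ε w.x)

/-- ε-generalized pseudo-orbit. -/
def IsGPO (F : GoodMap) (χ ε : ℝ) (v : ℤ → Chart) : Prop :=
  ∀ n : ℤ, Edge F χ ε (v n) (v (n + 1))

/-- weak ε-generalized pseudo-orbit. -/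
def IsWeakGPO (F : GoodMap) (χ ε : ℝ) (v : ℤ → Chart) : Prop :=
  ∀ n : ℤ, WeakEdge F χ ε (v n) (v (n + 1))

/-- The range `Ψ_{x̂}([-p,p])` of an ε-chart. -/
def chartRange (F : GoodMap) (χ : ℝ) (c : Chart) : Set ℝ :=
  Psi F.f χ c.x '' Set.Icc (-c.p) c.p

/-- A bi-infinite sequence of ε-charts shadows `x̂ ∈ M̂`. -/
def Shadows (F : GoodMap) (χ : ℝ) (v : ℤ → Chart) (x : ℤ → ℝ) : Prop :=
  inMhat F.f x ∧ ∀ n : ℤ, x n ∈ chartRange F χ (v n)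

/-- `q_ε(x̂) = δ_ε inf{e^{ε|m|} Q_ε(f̂^m x̂) : m ≤ 0}`. -/
def qeps (F : GoodMap) (χ ε : ℝ) (x : ℤ → ℝ) : ℝ :=
  deltaEps ε *
    sInf {t : ℝ | ∃ m : ℤ, m ≤ 0 ∧ t = Real.exp (ε * |(m:ℝ)|) * Qeps F χ ε (fhatI m x)}

/-- Recurrence: some symbol repeats infinitely often in the future and some in the past. -/
def Recurrent {V : Type*} (v : ℤ → V) : Prop :=
  (∃ c, {n : ℤ | 0 < n ∧ v n = c}.Infinite) ∧ ∃ c, {n : ℤ | n < 0 ∧ v n = c}.Infinite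

/-- The distance `d(v,w) = exp(-min{|n| : v_n ≠ w_n})` on sequence spaces. -/
def dSigma {V : Type*} (v w : ℤ → V) : ℝ :=
  sSup {t : ℝ | ∃ n : ℤ, v n ≠ w n ∧ t = Real.exp (-|(n:ℝ)|)}

/-- Sup norm over a set. -/
def supNorm (h : ℝ → ℝ) (I : Set ℝ) : ℝ := sSup ((fun t => |h t|) '' I)

/-- Hölder constant over a set. -/
def holConst (γ : ℝ) (h : ℝ → ℝ) (I : Set ℝ) : ℝ :=
  sSup {r : ℝ | ∃ t ∈ I, ∃ s ∈ I, t ≠ s ∧ r = |h t - h s| / |t - s| ^ γ}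

/-!
In Pesin charts the inverse branch `g_{x̂}` becomes `G_{x̂}`, whose derivative at `0` is
`A = u(f̂⁻¹x̂) / (f'(x₋₁) u(x̂))`. Splitting off the first term of the series defining `u` gives the
identity `u(x̂)² = 1 + (e^χ u(f̂⁻¹x̂) / f'(x₋₁))²`, and hence `|A| < e^{-χ}`. The chart at `x̂` contracts
and the chart at `f̂⁻¹x̂` expands by `u(f̂⁻¹x̂)`, so `dG_{x̂}` is `β`-Hölder with constant `K u(f̂⁻¹x̂)`.
On an interval of length `20 Q_ε(x̂)`, half of the exponent `β` can be traded for the factor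
`(20 Q_ε(x̂))^{β/2} ≤ 20 ε^{3/2} u(f̂⁻¹x̂)^{-6}`, which absorbs `u(f̂⁻¹x̂)` and leaves a Hölder constant
of order `ε^{3/2}`.
-/

/-- `C^{1+γ}` diffeomorphisms of `s` onto its image, with the Hölder constant `C` of the derivative
made explicit. The derivative is the ordinary one, so `g` is differentiable on both sides of the
boundary points of `s`. -/
structure IsHolderDiffeoOn (γ C : ℝ) (g : ℝ → ℝ) (s : Set ℝ) : Prop where
  injOn : InjOn g s
  differentiableAt : ∀ t ∈ s, DifferentiableAt ℝ g t
  deriv_ne_zero : ∀ t ∈ s, deriv g t ≠ 0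
  abs_deriv_sub_le : ∀ t ∈ s, ∀ t' ∈ s, |deriv g t - deriv g t'| ≤ C * |t - t'| ^ γ

theorem supNorm_le {h : ℝ → ℝ} {I : Set ℝ} {C : ℝ} (hC : 0 ≤ C) (hh : ∀ t ∈ I, |h t| ≤ C) :
    supNorm h I ≤ C :=
  Real.sSup_le (forall_mem_image.mpr hh) hC

theorem holConst_le {γ C : ℝ} {h : ℝ → ℝ} {I : Set ℝ} (hC : 0 ≤ C)
    (hh : ∀ t ∈ I, ∀ s ∈ I, |h t - h s| ≤ C * |t - s| ^ γ) : holConst γ h I ≤ C := by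
  refine Real.sSup_le ?_ hC
  rintro _ ⟨t, ht, s, hs, hts, rfl⟩
  exact (div_le_iff₀ (rpow_pos_of_pos (abs_sub_pos.mpr hts) γ)).mpr (hh t ht s hs)

theorem hasDerivAt_rescale {g : ℝ → ℝ} {u p t : ℝ} (v q : ℝ)
    (hg : DifferentiableAt ℝ g (t / u + p)) :
    HasDerivAt (fun t ↦ v * (g (t / u + p) - q)) (v * deriv g (t / u + p) / u) t := by
  have hchart : HasDerivAt (fun t ↦ t / u + p) (1 / u) t :=
    ((hasDerivAt_id t).div_const u).add_const p
  exact (((hg.hasDerivAt.comp t hchart).sub_const q).const_mul v).congr_deriv (by ring)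

namespace IsHolderDiffeoOn

variable {γ C : ℝ} {g : ℝ → ℝ} {s : Set ℝ}

theorem rescale (hg : IsHolderDiffeoOn γ C g s) (hγ : 0 ≤ γ) (hC : 0 ≤ C) {u v p : ℝ} (q : ℝ)
    (hu : 1 ≤ u) (hv : 0 < v) {I : Set ℝ} (hI : MapsTo (fun t ↦ t / u + p) I s) :
    IsHolderDiffeoOn γ (v * C) (fun t ↦ v * (g (t / u + p) - q)) I where
  injOn := by
    intro t ht t' ht' h
    have heq := hg.injOn (hI ht) (hI ht') (sub_left_injective (mul_left_cancel₀ hv.ne' h))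
    exact (div_left_inj' (by positivity)).mp (add_right_cancel heq)
  differentiableAt t ht :=
    (hasDerivAt_rescale v q (hg.differentiableAt _ (hI ht))).differentiableAt
  deriv_ne_zero t ht := by
    rw [(hasDerivAt_rescale v q (hg.differentiableAt _ (hI ht))).deriv]
    exact div_ne_zero (mul_ne_zero hv.ne' (hg.deriv_ne_zero _ (hI ht))) (by positivity)
  abs_deriv_sub_le t ht t' ht' := by
    have hchart : |(t / u + p) - (t' / u + p)| ≤ |t - t'| := by
      rw [add_sub_add_right_eq_sub, ← sub_div, abs_div, abs_of_pos (by positivity : 0 < u)]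
      exact div_le_self (abs_nonneg _) hu
    rw [(hasDerivAt_rescale v q (hg.differentiableAt _ (hI ht))).deriv,
      (hasDerivAt_rescale v q (hg.differentiableAt _ (hI ht'))).deriv, ← sub_div, ← mul_sub,
      abs_div, abs_mul, abs_of_pos hv, abs_of_pos (by positivity : 0 < u)]
    calc v * |deriv g (t / u + p) - deriv g (t' / u + p)| / u
      _ ≤ v * |deriv g (t / u + p) - deriv g (t' / u + p)| := div_le_self (by positivity) hu
      _ ≤ v * (C * |(t / u + p) - (t' / u + p)| ^ γ) := by
        gcongr
        exact hg.abs_deriv_sub_le _ (hI ht) _ (hI ht')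
      _ ≤ v * (C * |t - t'| ^ γ) := by gcongr
      _ = v * C * |t - t'| ^ γ := by ring

theorem mono_const (hg : IsHolderDiffeoOn γ C g s) {C' : ℝ} (hC : C ≤ C') :
    IsHolderDiffeoOn γ C' g s where
  __ := hg
  abs_deriv_sub_le t ht t' ht' := (hg.abs_deriv_sub_le t ht t' ht').trans (by gcongr)

theorem lower_exponent {γ' : ℝ} (hg : IsHolderDiffeoOn (γ' + γ) C g s) (hC : 0 ≤ C)
    (hγ : 0 ≤ γ) (hγ' : 0 ≤ γ') {d : ℝ} (hd : ∀ t ∈ s, ∀ t' ∈ s, |t - t'| ≤ d) :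
    IsHolderDiffeoOn γ (C * d ^ γ') g s where
  __ := hg
  abs_deriv_sub_le t ht t' ht' := by
    have hdist := hd t ht t' ht'
    calc |deriv g t - deriv g t'|
      _ ≤ C * |t - t'| ^ (γ' + γ) := hg.abs_deriv_sub_le t ht t' ht'
      _ = C * |t - t'| ^ γ' * |t - t'| ^ γ := by
        rw [rpow_add_of_nonneg (abs_nonneg _) hγ' hγ, mul_assoc]
      _ ≤ C * d ^ γ' * |t - t'| ^ γ := by gcongr

theorem hasDerivAt_remainder (hg : IsHolderDiffeoOn γ C g s) {t : ℝ} (ht : t ∈ s) :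
    HasDerivAt (fun t ↦ g t - deriv g 0 * t) (deriv g t - deriv g 0) t :=
  ((hg.differentiableAt t ht).hasDerivAt.sub ((hasDerivAt_id t).const_mul _)).congr_deriv
    (by rw [mul_one])

theorem abs_deriv_sub_deriv_zero_le (hg : IsHolderDiffeoOn γ C g s) (hγ : 0 ≤ γ) (hC : 0 ≤ C)
    (h0 : 0 ∈ s) (h1 : ∀ t ∈ s, |t| ≤ 1) {t : ℝ} (ht : t ∈ s) :
    |deriv g t - deriv g 0| ≤ C := by
  refine (hg.abs_deriv_sub_le t ht 0 h0).trans (mul_le_of_le_one_right hC ?_)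
  rw [sub_zero]
  exact rpow_le_one (abs_nonneg t) (h1 t ht) hγ

theorem supNorm_deriv_le (hg : IsHolderDiffeoOn γ C g s) (hγ : 0 ≤ γ) (hC : 0 ≤ C)
    (h0 : 0 ∈ s) (h1 : ∀ t ∈ s, |t| ≤ 1) : supNorm (deriv g) s ≤ |deriv g 0| + C := by
  refine supNorm_le (by positivity) fun t ht ↦ ?_
  calc |deriv g t| = |deriv g 0 + (deriv g t - deriv g 0)| := by rw [add_sub_cancel]
    _ ≤ |deriv g 0| + |deriv g t - deriv g 0| := abs_add_le _ _
    _ ≤ |deriv g 0| + C := by gcongr; exact hg.abs_deriv_sub_deriv_zero_le hγ hC h0 h1 ht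

theorem abs_remainder_le (hg : IsHolderDiffeoOn γ C g s) (hγ : 0 ≤ γ) (hC : 0 ≤ C)
    (hs : Convex ℝ s) (h0 : 0 ∈ s) (h1 : ∀ t ∈ s, |t| ≤ 1) (hg0 : g 0 = 0) {t : ℝ} (ht : t ∈ s) :
    |g t - deriv g 0 * t| ≤ C := by
  have hmvt := hs.norm_image_sub_le_of_norm_hasDerivWithin_le
    (fun t ht ↦ (hg.hasDerivAt_remainder ht).hasDerivWithinAt)
    (fun t ht ↦ hg.abs_deriv_sub_deriv_zero_le hγ hC h0 h1 ht) h0 ht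
  simp only [hg0, mul_zero, sub_zero, norm_eq_abs] at hmvt
  exact hmvt.trans (mul_le_of_le_one_right hC (h1 t ht))

theorem norms_remainder_le (hg : IsHolderDiffeoOn γ C g s) (hγ : 0 ≤ γ) (hC : 0 ≤ C)
    (hs : Convex ℝ s) (h0 : 0 ∈ s) (h1 : ∀ t ∈ s, |t| ≤ 1) (hg0 : g 0 = 0) :
    supNorm (fun t ↦ g t - deriv g 0 * t) s + supNorm (deriv fun t ↦ g t - deriv g 0 * t) s +
      holConst γ (deriv fun t ↦ g t - deriv g 0 * t) s ≤ 3 * C := by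
  have hsup : supNorm (fun t ↦ g t - deriv g 0 * t) s ≤ C :=
    supNorm_le hC fun t ht ↦ hg.abs_remainder_le hγ hC hs h0 h1 hg0 ht
  have hsup_deriv : supNorm (deriv fun t ↦ g t - deriv g 0 * t) s ≤ C := by
    refine supNorm_le hC fun t ht ↦ ?_
    rw [(hg.hasDerivAt_remainder ht).deriv]
    exact hg.abs_deriv_sub_deriv_zero_le hγ hC h0 h1 ht
  have hhol : holConst γ (deriv fun t ↦ g t - deriv g 0 * t) s ≤ C := by
    refine holConst_le hC fun t ht t' ht' ↦ ?_
    rw [(hg.hasDerivAt_remainder ht).deriv, (hg.hasDerivAt_remainder ht').deriv,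
      sub_sub_sub_cancel_right]
    exact hg.abs_deriv_sub_le t ht t' ht'
  linarith

end IsHolderDiffeoOn

namespace GoodMap

variable {F : GoodMap} {y : ℝ}

theorem dS_nonneg : 0 ≤ F.dS y := infDist_nonneg

theorem S_subset_Mset : F.S ⊆ Mset :=
  union_subset (fun _ h ↦ h.1.1) F.hD

theorem dS_le_one (hy : y ∈ Mset) : F.dS y ≤ 1 := by
  obtain hS | ⟨s, hs⟩ := F.S.eq_empty_or_nonempty
  · simp [dS, hS]
  · have hdist := dist_le_of_mem_Icc hy (S_subset_Mset hs)
    exact (infDist_le_dist_of_mem hs).trans (hdist.trans (by norm_num))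

theorem deriv_ne_zero_of_notMem_S (hy : y ∈ Mset) (hS : y ∉ F.S) : deriv F.f y ≠ 0 :=
  fun h ↦ hS <| by
    by_cases hD : y ∈ F.D
    exacts [.inr hD, .inl ⟨⟨hy, hD⟩, h⟩]

theorem SatA.r_pos (hF : F.SatA) (hy : y ∈ Mset) (hS : y ∉ F.S) (hfS : F.f y ∉ F.S) :
    0 < F.r y :=
  (le_min (rpow_nonneg dS_nonneg _) (rpow_nonneg dS_nonneg _)).trans_lt (hF y hy hS hfS).1.1

-- If `dS y = 0`, then `dS y ^ (-a) = 0` by the junk value of `rpow`, and (A2) makes `y` critical.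
theorem SatA.dS_pos (hF : F.SatA) (hy : y ∈ Mset) (hS : y ∉ F.S) (hfS : F.f y ∉ F.S) :
    0 < F.dS y := by
  refine dS_nonneg.lt_of_ne fun h0 ↦ deriv_ne_zero_of_notMem_S hy hS ?_
  have hr := hF.r_pos hy hS hfS
  have hA2 := ((hF y hy hS hfS).2.2.1.1 y (mem_ball_self (by positivity))).2
  rwa [← h0, zero_rpow (neg_ne_zero.mpr (zero_lt_one.trans F.ha).ne'), abs_nonpos_iff] at hA2

theorem SatA.isHolderDiffeoOn_g (hF : F.SatA) (hy : y ∈ Mset) (hS : y ∉ F.S)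
    (hfS : F.f y ∉ F.S) :
    IsHolderDiffeoOn F.β F.K (F.g y) (ball (F.f y) (2 * F.r y)) := by
  obtain ⟨-, ⟨-, -, -, -, hinj, hdiff⟩, ⟨-, hA2⟩, -, hA3⟩ := hF y hy hS hfS
  have hpos := rpow_pos_of_pos (hF.dS_pos hy hS hfS) F.a
  exact ⟨hinj, hdiff, fun z hz ↦ abs_pos.mp (hpos.trans_le (hA2 z hz).1), hA3⟩

theorem SatA.deriv_g (hF : F.SatA) (hy : y ∈ Mset) (hS : y ∉ F.S) (hfS : F.f y ∉ F.S) :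
    deriv (F.g y) (F.f y) = (deriv F.f y)⁻¹ := by
  have hr : 0 < 2 * F.r y := mul_pos two_pos (hF.r_pos hy hS hfS)
  obtain ⟨-, ⟨-, hfdiff, hgf, hfg, -, hgdiff⟩, -⟩ := hF y hy hS hfS
  have hf : HasDerivAt F.f (deriv F.f y) (F.g y (F.f y)) := by
    rw [hgf]
    exact (hfdiff y (mem_ball_self hr)).hasDerivAt
  exact (hf.of_local_left_inverse (hgdiff _ (mem_ball_self hr)).continuousAt
    (deriv_ne_zero_of_notMem_S hy hS) (eventually_of_mem (ball_mem_nhds _ hr) hfg)).deriv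

end GoodMap

section PesinParameter

variable {f : ℝ → ℝ} {χ : ℝ} {x : ℤ → ℝ}

/-- The `n`-th term `e^{2nχ} |d̂f^{(-n)}|²` of the series defining `u(x̂)²`. -/
def pesinTerm (f : ℝ → ℝ) (χ : ℝ) (x : ℤ → ℝ) (n : ℕ) : ℝ :=
  exp (2 * (n : ℝ) * χ) * dfhat f x (-(n : ℤ)) ^ 2

theorem dfhat_neg_natCast (f : ℝ → ℝ) (x : ℤ → ℝ) (n : ℕ) :
    dfhat f x (-(n : ℤ)) = (∏ j ∈ Finset.range n, deriv f (x (-(j : ℤ) - 1)))⁻¹ := by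
  obtain rfl | hn := n.eq_zero_or_pos
  · simp [dfhat]
  · rw [dfhat, if_neg (by omega), neg_neg, Int.toNat_natCast]

theorem dfhat_neg_succ (f : ℝ → ℝ) (x : ℤ → ℝ) (n : ℕ) :
    dfhat f x (-((n + 1 : ℕ) : ℤ)) =
      dfhat f (fhatI (-1) x) (-(n : ℤ)) * (deriv f (x (-1)))⁻¹ := by
  have hshift (j : ℕ) : x (-((j + 1 : ℕ) : ℤ) - 1) = fhatI (-1) x (-(j : ℤ) - 1) := by
    rw [fhatI]
    congr 1
    omega
  simp only [dfhat_neg_natCast, Finset.prod_range_succ', mul_inv, hshift]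
  simp

theorem pesinTerm_nonneg (n : ℕ) : 0 ≤ pesinTerm f χ x n := by
  unfold pesinTerm
  positivity

theorem pesinTerm_zero : pesinTerm f χ x 0 = 1 := by
  simp [pesinTerm, dfhat]

theorem pesinTerm_succ (n : ℕ) :
    pesinTerm f χ x (n + 1) =
      (exp χ * (deriv f (x (-1)))⁻¹) ^ 2 * pesinTerm f χ (fhatI (-1) x) n := by
  have hexp : exp (2 * ((n + 1 : ℕ) : ℝ) * χ) = exp (2 * (n : ℝ) * χ) * exp χ ^ 2 := by
    rw [← exp_nat_mul, ← exp_add]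
    push_cast
    ring_nf
  rw [pesinTerm, pesinTerm, dfhat_neg_succ, hexp]
  ring

theorem summable_pesinTerm_fhatI (hx : Summable (pesinTerm f χ x)) (hd : deriv f (x (-1)) ≠ 0) :
    Summable (pesinTerm f χ (fhatI (-1) x)) := by
  have htail := (summable_nat_add_iff 1).mpr hx
  simp only [pesinTerm_succ] at htail
  exact (summable_mul_left_iff (by positivity)).mp htail

theorem summable_exp_mul_sq_of_tendsto_log {c : ℕ → ℝ} {l : ℝ} (hl : χ < l)
    (hc : Tendsto (fun n : ℕ ↦ log |c n| / (-(n : ℝ))) atTop (𝓝 l)) :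
    Summable fun n : ℕ ↦ exp (2 * (n : ℝ) * χ) * c n ^ 2 := by
  have hgeo : Summable fun n : ℕ ↦ exp (χ - l) ^ n :=
    summable_geometric_of_lt_one (exp_pos _).le (exp_lt_one_iff.mpr (by linarith))
  refine Summable.of_norm_bounded_eventually_nat hgeo ?_
  filter_upwards [hc.eventually (lt_mem_nhds (by linarith : (χ + l) / 2 < l)),
    eventually_gt_atTop 0] with n hn hn0
  have hlog : log |c n| ≤ -(n * ((χ + l) / 2)) := by
    rw [div_neg, lt_neg, div_lt_iff₀ (by exact_mod_cast hn0)] at hn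
    linarith
  have habs : |c n| ≤ exp (-(n * ((χ + l) / 2))) := (le_exp_log _).trans (exp_le_exp.mpr hlog)
  rw [norm_of_nonneg (by positivity), ← sq_abs]
  calc exp (2 * (n : ℝ) * χ) * |c n| ^ 2
    _ ≤ exp (2 * (n : ℝ) * χ) * exp (-(n * ((χ + l) / 2))) ^ 2 := by gcongr
    _ = exp (χ - l) ^ n := by
      rw [← exp_nat_mul, ← exp_nat_mul, ← exp_add]
      push_cast
      ring_nf

theorem summable_pesinTerm_of_mem_NUE {F : GoodMap} (hx : x ∈ NUE F χ) :
    Summable (pesinTerm F.f χ x) :=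
  let ⟨_, _, _, _, hl, htendsto⟩ := hx
  summable_exp_mul_sq_of_tendsto_log hl htendsto

theorem uPes_nonneg : 0 ≤ uPes f χ x := sqrt_nonneg _

theorem uPes_sq : uPes f χ x ^ 2 = ∑' n, pesinTerm f χ x n :=
  sq_sqrt (tsum_nonneg pesinTerm_nonneg)

theorem one_le_uPes (hx : Summable (pesinTerm f χ x)) : 1 ≤ uPes f χ x :=
  one_le_sqrt.mpr <| pesinTerm_zero.symm.le.trans <| hx.le_tsum 0 fun n _ ↦ pesinTerm_nonneg n

theorem one_le_uPes_fhatI (hx : Summable (pesinTerm f χ x)) (hd : deriv f (x (-1)) ≠ 0) :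
    1 ≤ uPes f χ (fhatI (-1) x) :=
  one_le_uPes (summable_pesinTerm_fhatI hx hd)

theorem uPes_sq_eq_one_add (hx : Summable (pesinTerm f χ x)) :
    uPes f χ x ^ 2 =
      1 + (exp χ * (uPes f χ (fhatI (-1) x) * (deriv f (x (-1)))⁻¹)) ^ 2 := by
  rw [uPes_sq, hx.tsum_eq_zero_add, pesinTerm_zero]
  simp only [pesinTerm_succ]
  rw [tsum_mul_left, ← uPes_sq]
  ring

theorem abs_uPes_mul_inv_deriv_div_lt (hx : Summable (pesinTerm f χ x)) :
    |uPes f χ (fhatI (-1) x) * (deriv f (x (-1)))⁻¹ / uPes f χ x| < exp (-χ) := by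
  have hu : 0 < uPes f χ x := zero_lt_one.trans_le (one_le_uPes hx)
  have hsq := uPes_sq_eq_one_add hx
  have habs : |exp χ * (uPes f χ (fhatI (-1) x) * (deriv f (x (-1)))⁻¹)| < uPes f χ x :=
    abs_lt_of_sq_lt_sq (by linarith) hu.le
  rw [abs_mul, abs_of_pos (exp_pos χ)] at habs
  rwa [abs_div, abs_of_pos hu, div_lt_iff₀ hu, exp_neg, ← div_eq_inv_mul,
    lt_div_iff₀' (exp_pos χ)]

end PesinParameter

section PesinInterval

variable {F : GoodMap} {χ ε : ℝ} {x : ℤ → ℝ}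

theorem rho_nonneg : 0 ≤ rho F x :=
  le_min GoodMap.dS_nonneg (le_min GoodMap.dS_nonneg GoodMap.dS_nonneg)

theorem rho_le_one (hx : x (-1) ∈ Mset) : rho F x ≤ 1 :=
  (min_le_left _ _).trans (GoodMap.dS_le_one hx)

theorem Qtilde_nonneg (hε : 0 ≤ ε) : 0 ≤ Qtilde F χ ε x := by
  have := rho_nonneg (F := F) (x := x)
  have := uPes_nonneg (f := F.f) (χ := χ) (x := x)
  have := uPes_nonneg (f := F.f) (χ := χ) (x := fhatI (-1) x)
  unfold Qtilde
  positivity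

theorem Qeps_nonneg : 0 ≤ Qeps F χ ε x := by
  refine Real.sSup_nonneg ?_
  rintro _ ⟨⟨n, rfl⟩, -⟩
  positivity

theorem Qeps_le_Qtilde (hε : 0 ≤ ε) : Qeps F χ ε x ≤ Qtilde F χ ε x :=
  Real.sSup_le (fun _ h ↦ h.2) (Qtilde_nonneg hε)

theorem Qeps_le_mul (hε : 0 ≤ ε) :
    Qeps F χ ε x ≤ ε ^ (3 / F.β) *
      (uPes F.f χ (fhatI (-1) x) ^ (-(12 / F.β)) * rho F x ^ (72 * F.a / F.β)) :=
  (Qeps_le_Qtilde hε).trans <|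
    mul_le_mul_of_nonneg_left (min_le_right _ _) (rpow_nonneg hε _)

theorem Qeps_le_pow_mul_rho_rpow (hε : 0 ≤ ε) (hε1 : ε ≤ 1) (hx : x (-1) ∈ Mset)
    (hv : 1 ≤ uPes F.f χ (fhatI (-1) x)) : Qeps F χ ε x ≤ ε ^ 3 * rho F x ^ F.a := by
  have hβ := F.hβ0
  have hβ1 := F.hβ1
  have ha := F.ha
  have hρ := rho_nonneg (F := F) (x := x)
  have hε_rpow : ε ^ (3 / F.β) ≤ ε ^ 3 := by
    rw [← rpow_natCast]
    refine rpow_le_rpow_of_exponent_ge' hε hε1 (by positivity) ?_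
    rw [le_div_iff₀ hβ]
    push_cast
    linarith
  have hv_rpow : uPes F.f χ (fhatI (-1) x) ^ (-(12 / F.β)) ≤ 1 :=
    rpow_le_one_of_one_le_of_nonpos hv (neg_nonpos.mpr (by positivity))
  have hρ_rpow : rho F x ^ (72 * F.a / F.β) ≤ rho F x ^ F.a := by
    refine rpow_le_rpow_of_exponent_ge' hρ (rho_le_one hx) (by positivity) ?_
    rw [le_div_iff₀ hβ]
    nlinarith
  calc Qeps F χ ε x
    _ ≤ ε ^ (3 / F.β) *
        (uPes F.f χ (fhatI (-1) x) ^ (-(12 / F.β)) * rho F x ^ (72 * F.a / F.β)) :=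
      Qeps_le_mul hε
    _ ≤ ε ^ 3 * (1 * rho F x ^ F.a) := by gcongr
    _ = ε ^ 3 * rho F x ^ F.a := by rw [one_mul]

theorem Qeps_le_rpow_mul_uPes_rpow (hε : 0 ≤ ε) (hx : x (-1) ∈ Mset) :
    Qeps F χ ε x ≤ ε ^ (3 / F.β) * uPes F.f χ (fhatI (-1) x) ^ (-(12 / F.β)) := by
  have hβ := F.hβ0
  have ha := F.ha
  have hv := uPes_nonneg (f := F.f) (χ := χ) (x := fhatI (-1) x)
  have hρ_rpow : rho F x ^ (72 * F.a / F.β) ≤ 1 :=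
    rpow_le_one rho_nonneg (rho_le_one hx) (by positivity)
  refine (Qeps_le_mul hε).trans ?_
  gcongr
  exact mul_le_of_le_one_right (by positivity) hρ_rpow

theorem Qeps_rpow_half_le (hε : 0 ≤ ε) (hx : x (-1) ∈ Mset) :
    Qeps F χ ε x ^ (F.β / 2) ≤
      ε ^ (3 / 2 : ℝ) * uPes F.f χ (fhatI (-1) x) ^ (-6 : ℝ) := by
  have hβ := F.hβ0
  have hv := uPes_nonneg (f := F.f) (χ := χ) (x := fhatI (-1) x)
  calc Qeps F χ ε x ^ (F.β / 2)
    _ ≤ (ε ^ (3 / F.β) * uPes F.f χ (fhatI (-1) x) ^ (-(12 / F.β))) ^ (F.β / 2) :=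
      rpow_le_rpow Qeps_nonneg (Qeps_le_rpow_mul_uPes_rpow hε hx) (by positivity)
    _ = ε ^ (3 / F.β * (F.β / 2)) *
        uPes F.f χ (fhatI (-1) x) ^ (-(12 / F.β) * (F.β / 2)) := by
      rw [mul_rpow (by positivity) (by positivity), ← rpow_mul hε, ← rpow_mul hv]
    _ = ε ^ (3 / 2 : ℝ) * uPes F.f χ (fhatI (-1) x) ^ (-6 : ℝ) := by
      have hε_exp : 3 / F.β * (F.β / 2) = 3 / 2 := by field_simp
      have hv_exp : -(12 / F.β) * (F.β / 2) = -6 := by field_simp; norm_num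
      rw [hε_exp, hv_exp]

theorem uPes_mul_Qeps_rpow_half_le (hε : 0 ≤ ε) (hx : x (-1) ∈ Mset)
    (hv : 1 ≤ uPes F.f χ (fhatI (-1) x)) :
    uPes F.f χ (fhatI (-1) x) * (20 * Qeps F χ ε x) ^ (F.β / 2) ≤ 20 * ε ^ (3 / 2 : ℝ) := by
  set v := uPes F.f χ (fhatI (-1) x)
  have h20 : (20 : ℝ) ^ (F.β / 2) ≤ 20 :=
    rpow_le_self_of_one_le (by norm_num) (by linarith [F.hβ1])
  have hv_rpow : v * v ^ (-6 : ℝ) ≤ 1 := by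
    rw [← rpow_one_add' (by positivity) (by norm_num)]
    exact rpow_le_one_of_one_le_of_nonpos hv (by norm_num)
  calc v * (20 * Qeps F χ ε x) ^ (F.β / 2)
    _ = v * (20 ^ (F.β / 2) * Qeps F χ ε x ^ (F.β / 2)) := by
      rw [mul_rpow (by norm_num) Qeps_nonneg]
    _ ≤ v * (20 * (ε ^ (3 / 2 : ℝ) * v ^ (-6 : ℝ))) := by
      have hQ := Qeps_nonneg (F := F) (χ := χ) (ε := ε) (x := x)
      gcongr
      exact Qeps_rpow_half_le hε hx
    _ = 20 * ε ^ (3 / 2 : ℝ) * (v * v ^ (-6 : ℝ)) := by ring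
    _ ≤ 20 * ε ^ (3 / 2 : ℝ) := mul_le_of_le_one_right (by positivity) hv_rpow

theorem twenty_mul_Qeps_le_rho_rpow (hε : 0 ≤ ε) (hε10 : ε ≤ 1 / 10) (hx : x (-1) ∈ Mset)
    (hv : 1 ≤ uPes F.f χ (fhatI (-1) x)) : 20 * Qeps F χ ε x ≤ rho F x ^ F.a := by
  have hρ : 0 ≤ rho F x ^ F.a := rpow_nonneg rho_nonneg _
  have hε3 : ε ^ 3 ≤ (1 / 10) ^ 3 := by gcongr
  have hQ := Qeps_le_pow_mul_rho_rpow hε (by linarith) hx hv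
  nlinarith

theorem abs_le_one_of_mem_Icc_Qeps (hε : 0 ≤ ε) (hε10 : ε ≤ 1 / 10) (hx : x (-1) ∈ Mset)
    (hv : 1 ≤ uPes F.f χ (fhatI (-1) x)) {t : ℝ}
    (ht : t ∈ Icc (-(10 * Qeps F χ ε x)) (10 * Qeps F χ ε x)) : |t| ≤ 1 := by
  have ha := F.ha
  have hρ : rho F x ^ F.a ≤ 1 := rpow_le_one rho_nonneg (rho_le_one hx) (by positivity)
  have hQρ := twenty_mul_Qeps_le_rho_rpow hε hε10 hx hv
  exact (abs_le.mpr ht).trans (by linarith)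

end PesinInterval

section ChartedBranch

variable {F : GoodMap} {χ ε : ℝ} {x : ℤ → ℝ}

theorem inMhat.apply_neg_one {f : ℝ → ℝ} (hx : inMhat f x) : f (x (-1)) = x 0 := hx.2 0

theorem GoodMap.SatA.rho_rpow_lt_r (hF : F.SatA) (hx : inMhat F.f x) (hS : ∀ n, x n ∉ F.S) :
    rho F x ^ F.a < F.r (x (-1)) := by
  have ha := zero_lt_one.trans F.ha
  refine lt_of_le_of_lt ?_ (hF _ (hx.1 _) (hS _) (hx.apply_neg_one ▸ hS 0)).1.1
  rw [hx.apply_neg_one]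
  exact le_min (rpow_le_rpow rho_nonneg (min_le_left _ _) ha.le)
    (rpow_le_rpow rho_nonneg ((min_le_right _ _).trans (min_le_left _ _)) ha.le)

theorem mapsTo_Psi_ball (hu : 1 ≤ uPes F.f χ x) {R r : ℝ} (hR : R < r) :
    MapsTo (Psi F.f χ x) (Icc (-R) R) (ball (x 0) r) := by
  intro t ht
  rw [mem_ball, dist_eq, Psi, add_sub_cancel_right, abs_div,
    abs_of_pos (zero_lt_one.trans_le hu)]
  exact (div_le_self (abs_nonneg t) hu).trans_lt ((abs_le.mpr ht).trans_lt hR)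

theorem Gmap_zero (hF : F.SatA) (hx : inMhat F.f x) (hS : ∀ n, x n ∉ F.S) :
    Gmap F χ x 0 = 0 := by
  have hgf := (hF _ (hx.1 (-1)) (hS _) (hx.apply_neg_one ▸ hS 0)).2.1.2.2.1
  rw [hx.apply_neg_one] at hgf
  simp [Gmap, Psi, ghat, hgf]

theorem deriv_Gmap_zero (hF : F.SatA) (hx : inMhat F.f x) (hS : ∀ n, x n ∉ F.S) :
    deriv (Gmap F χ x) 0 =
      uPes F.f χ (fhatI (-1) x) * (deriv F.f (x (-1)))⁻¹ / uPes F.f χ x := by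
  have hfS : F.f (x (-1)) ∉ F.S := hx.apply_neg_one ▸ hS 0
  have hr := hF.r_pos (hx.1 _) (hS _) hfS
  have hdiff : DifferentiableAt ℝ (F.g (x (-1))) (0 / uPes F.f χ x + x 0) := by
    rw [zero_div, zero_add, ← hx.apply_neg_one]
    exact (hF.isHolderDiffeoOn_g (hx.1 _) (hS _) hfS).differentiableAt _
      (mem_ball_self (by positivity))
  have hderiv := (hasDerivAt_rescale (uPes F.f χ (fhatI (-1) x)) (x (-1)) hdiff).deriv
  rwa [zero_div, zero_add, ← hx.apply_neg_one, hF.deriv_g (hx.1 _) (hS _) hfS,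
    hx.apply_neg_one] at hderiv

theorem isHolderDiffeoOn_Gmap (hF : F.SatA) (hε : 0 ≤ ε) (hε10 : ε ≤ 1 / 10)
    (hx : inMhat F.f x) (hS : ∀ n, x n ∉ F.S) (hsum : Summable (pesinTerm F.f χ x)) :
    IsHolderDiffeoOn (F.β / 2) (20 * F.K * ε ^ (3 / 2 : ℝ)) (Gmap F χ x)
      (Icc (-(10 * Qeps F χ ε x)) (10 * Qeps F χ ε x)) := by
  have hβ := F.hβ0
  have hK := zero_lt_one.trans F.hK
  have hu := one_le_uPes hsum
  have hv := one_le_uPes_fhatI hsum (GoodMap.deriv_ne_zero_of_notMem_S (hx.1 _) (hS _))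
  have hbranch : IsHolderDiffeoOn F.β F.K (ghat F x) (ball (x 0) (2 * F.r (x (-1)))) :=
    hx.apply_neg_one ▸ hF.isHolderDiffeoOn_g (hx.1 _) (hS _) (hx.apply_neg_one ▸ hS 0)
  have hradius : 10 * Qeps F χ ε x < 2 * F.r (x (-1)) := by
    have hQρ := twenty_mul_Qeps_le_rho_rpow hε hε10 (hx.1 _) hv
    have hQ := Qeps_nonneg (F := F) (χ := χ) (ε := ε) (x := x)
    linarith [hF.rho_rpow_lt_r hx hS]
  have hcharted := hbranch.rescale hβ.le hK.le (x (-1)) hu (zero_lt_one.trans_le hv)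
    (mapsTo_Psi_ball hu hradius)
  rw [← add_halves F.β] at hcharted
  refine (hcharted.lower_exponent (d := 20 * Qeps F χ ε x) (by positivity) (by positivity)
    (by positivity) fun t ht t' ht' ↦ ?_).mono_const ?_
  · exact (abs_sub_le_of_le_of_le ht.1 ht.2 ht'.1 ht'.2).trans_eq (by ring)
  · calc uPes F.f χ (fhatI (-1) x) * F.K * (20 * Qeps F χ ε x) ^ (F.β / 2)
      _ = F.K * (uPes F.f χ (fhatI (-1) x) * (20 * Qeps F χ ε x) ^ (F.β / 2)) := by ring
      _ ≤ F.K * (20 * ε ^ (3 / 2 : ℝ)) := by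
        exact mul_le_mul_of_nonneg_left (uPes_mul_Qeps_rpow_half_le hε (hx.1 _) hv) hK.le
      _ = 20 * F.K * ε ^ (3 / 2 : ℝ) := by ring

end ChartedBranch

theorem eventually_mul_rpow_lt_self (c : ℝ) : ∀ᶠ ε in 𝓝[>] (0 : ℝ), c * ε ^ (3 / 2 : ℝ) < ε := by
  have hcont : ContinuousAt (fun ε : ℝ ↦ c * ε ^ (1 / 2 : ℝ)) 0 :=
    (continuousAt_rpow_const 0 (1 / 2) (.inr (by norm_num))).const_mul c
  have hlt : ∀ᶠ ε in 𝓝[>] (0 : ℝ), c * ε ^ (1 / 2 : ℝ) < 1 :=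
    (hcont.eventually (gt_mem_nhds (by norm_num))).filter_mono nhdsWithin_le_nhds
  filter_upwards [hlt, self_mem_nhdsWithin] with ε hε hpos
  calc c * ε ^ (3 / 2 : ℝ) = c * ε ^ (1 / 2 : ℝ) * ε := by
        rw [mul_assoc, ← rpow_add_one (ne_of_gt hpos)]
        norm_num
    _ < ε := mul_lt_of_lt_one_left hpos hε

theorem eventually_pesin_smallness (K : ℝ) {χ : ℝ} (hχ : 0 < χ) :
    ∀ᶠ ε in 𝓝[>] (0 : ℝ),
      ε < 1 / 10 ∧ 60 * K * ε ^ (3 / 2 : ℝ) < ε ∧ exp (-χ) + ε < exp (-χ / 2) := by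
  have hgap : 0 < exp (-χ / 2) - exp (-χ) := sub_pos.mpr (exp_lt_exp.mpr (by linarith))
  filter_upwards [Ioo_mem_nhdsGT (by norm_num : (0 : ℝ) < 1 / 10), Ioo_mem_nhdsGT hgap,
    eventually_mul_rpow_lt_self (60 * K)] with ε hε10 hεgap hεK
  exact ⟨hε10.2, hεK, lt_sub_iff_add_lt'.mp hεgap.2⟩

theorem nonlinear_pesin_general (K χ : ℝ) (hχ : 0 < χ) :
    ∃ ε₀ > 0, ∀ F : GoodMap, F.K ≤ K → F.SatA → ∀ ε : ℝ, 0 < ε → ε < ε₀ →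
      ∀ x, inMhat F.f x → (∀ n, x n ∉ F.S) → Summable (pesinTerm F.f χ x) →
        InjOn (Gmap F χ x) (Icc (-(10 * Qeps F χ ε x)) (10 * Qeps F χ ε x)) ∧
        (∀ t ∈ Icc (-(10 * Qeps F χ ε x)) (10 * Qeps F χ ε x),
          DifferentiableAt ℝ (Gmap F χ x) t ∧ deriv (Gmap F χ x) t ≠ 0) ∧
        (∃ A : ℝ, ∃ h : ℝ → ℝ,
          (∀ t ∈ Icc (-(10 * Qeps F χ ε x)) (10 * Qeps F χ ε x),
            Gmap F χ x t = A * t + h t) ∧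
          |A| < exp (-χ) ∧
          h 0 = 0 ∧ deriv h 0 = 0 ∧
          supNorm h (Icc (-(10 * Qeps F χ ε x)) (10 * Qeps F χ ε x)) +
            supNorm (deriv h) (Icc (-(10 * Qeps F χ ε x)) (10 * Qeps F χ ε x)) +
            holConst (F.β / 2) (deriv h)
              (Icc (-(10 * Qeps F χ ε x)) (10 * Qeps F χ ε x)) < ε) ∧
        supNorm (deriv (Gmap F χ x))
          (Icc (-(10 * Qeps F χ ε x)) (10 * Qeps F χ ε x)) < exp (-χ / 2) := by
  obtain ⟨ε₀, hε₀, hsmall⟩ :=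
    mem_nhdsGT_iff_exists_Ioo_subset.mp (eventually_pesin_smallness K hχ)
  refine ⟨ε₀, hε₀, fun F hFK hF ε hε hlt x hx hS hsum ↦ ?_⟩
  obtain ⟨hε10, hKε, hgap⟩ := hsmall ⟨hε, hlt⟩
  have hG := isHolderDiffeoOn_Gmap hF hε.le hε10.le hx hS hsum
  have hG0 := Gmap_zero (χ := χ) hF hx hS
  have hA : |deriv (Gmap F χ x) 0| < exp (-χ) :=
    deriv_Gmap_zero hF hx hS ▸ abs_uPes_mul_inv_deriv_div_lt hsum
  have hv := one_le_uPes_fhatI hsum (GoodMap.deriv_ne_zero_of_notMem_S (hx.1 _) (hS _))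
  have h0 : 0 ∈ Icc (-(10 * Qeps F χ ε x)) (10 * Qeps F χ ε x) := by
    simpa using Qeps_nonneg
  have h1 := fun t ↦ abs_le_one_of_mem_Icc_Qeps (t := t) hε.le hε10.le (hx.1 _) hv
  have hγ : 0 ≤ F.β / 2 := (half_pos F.hβ0).le
  have hK := zero_lt_one.trans F.hK
  have hC : 0 ≤ 20 * F.K * ε ^ (3 / 2 : ℝ) := by positivity
  have hCε : 3 * (20 * F.K * ε ^ (3 / 2 : ℝ)) < ε :=
    calc 3 * (20 * F.K * ε ^ (3 / 2 : ℝ)) = 60 * F.K * ε ^ (3 / 2 : ℝ) := by ring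
      _ ≤ 60 * K * ε ^ (3 / 2 : ℝ) := by gcongr
      _ < ε := hKε
  refine ⟨hG.injOn, fun t ht ↦ ⟨hG.differentiableAt t ht, hG.deriv_ne_zero t ht⟩,
    ⟨deriv (Gmap F χ x) 0, fun t ↦ Gmap F χ x t - deriv (Gmap F χ x) 0 * t,
      fun t _ ↦ (add_sub_cancel _ _).symm, hA, by simp [hG0],
      by simp [(hG.hasDerivAt_remainder h0).deriv],
      (hG.norms_remainder_le hγ hC (convex_Icc _ _) h0 h1 hG0).trans_lt hCε⟩, ?_⟩
  linarith [hG.supNorm_deriv_le hγ hC h0 h1]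

/-- nonlinear Pesin reduction (Theorem 2.4) for `G_{x̂}`. -/
theorem nonlinear_pesin (β a K χ : ℝ) (hχ : 0 < χ) :
    ∃ ε₀ > 0, ∀ F : GoodMap, F.β = β → F.a = a → F.K = K → F.SatA →
      ∀ ε : ℝ, 0 < ε → ε < ε₀ → ∀ x ∈ NUE F χ,
        Set.InjOn (Gmap F χ x) (Set.Icc (-(10 * Qeps F χ ε x)) (10 * Qeps F χ ε x)) ∧
        (∀ t ∈ Set.Icc (-(10 * Qeps F χ ε x)) (10 * Qeps F χ ε x),
          DifferentiableAt ℝ (Gmap F χ x) t ∧ deriv (Gmap F χ x) t ≠ 0) ∧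
        (∃ A : ℝ, ∃ h : ℝ → ℝ,
          (∀ t ∈ Set.Icc (-(10 * Qeps F χ ε x)) (10 * Qeps F χ ε x),
            Gmap F χ x t = A * t + h t) ∧
          |A| < Real.exp (-χ) ∧
          h 0 = 0 ∧ deriv h 0 = 0 ∧
          supNorm h (Set.Icc (-(10 * Qeps F χ ε x)) (10 * Qeps F χ ε x)) +
            supNorm (deriv h) (Set.Icc (-(10 * Qeps F χ ε x)) (10 * Qeps F χ ε x)) +
            holConst (F.β / 2) (deriv h)
              (Set.Icc (-(10 * Qeps F χ ε x)) (10 * Qeps F χ ε x)) < ε) ∧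
        supNorm (deriv (Gmap F χ x))
          (Set.Icc (-(10 * Qeps F χ ε x)) (10 * Qeps F χ ε x)) < Real.exp (-χ / 2) := by
  obtain ⟨ε₀, hε₀, hred⟩ := nonlinear_pesin_general K χ hχ
  exact ⟨ε₀, hε₀, fun F _ _ hFK hF ε hε hlt x hx ↦
    hred F hFK.le hF ε hε hlt x hx.1 hx.2.1 (summable_pesinTerm_of_mem_NUE hx)⟩

end OneDim
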